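/- Let s ≥ 0 and n ≥ 1 be integers with s + 1 ∉ B. If n is even with n > N_{s+1}^even, or n is odd with n > N_{s+1}^odd, then g(t_n, t_{n+1}, t_{n+2}; s+1) − g(t_n, t_{n+1}, t_{n+2}; s) = 6(n+1)(n+2)/4. -/

import Mathlib

open Finset

/-- Number of representations of `m` as `∑ i, a i * x i` with nonnegative integers `x i`
(for positive weights `a i`, every solution satisfies `x i ≤ m`). -/
def repCount {k : ℕ} (a : Fin k → ℕ) (m : ℕ) : ℕ :=
  (Finset.univ.filter (fun x : Fin k → Fin (m + 1) => ∑ i, a i * (x i : ℕ) = m)).card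

/-- Representation count extended to the integers (no representations of negative numbers). -/
def repCountZ {k : ℕ} (a : Fin k → ℕ) (m : ℤ) : ℕ :=
  if 0 ≤ m then repCount a m.toNat else 0

/-- The generalized Frobenius number `g(a; s)`: the largest integer having at most `s`
representations by the tuple `a`. -/
noncomputable def genFrob {k : ℕ} (a : Fin k → ℕ) (s : ℕ) : ℤ :=
  sSup {m : ℤ | repCountZ a m ≤ s}

/-- The `n`-th triangular number `t n = n(n+1)/2`. -/
def t (n : ℕ) : ℕ := n * (n + 1) / 2

/-- `N_s^even = 6⌊√(s+1)⌋ - 6`. -/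
def NEven (s : ℕ) : ℤ := 6 * (Nat.sqrt (s + 1) : ℤ) - 6

/-- `N_s^odd = 6⌊(√(4s+5) - 1)/2⌋ - 3`. -/
def NOdd (s : ℕ) : ℤ := 6 * (((Nat.sqrt (4 * s + 5) - 1) / 2 : ℕ) : ℤ) - 3

/-- `δ_s = 1` if `s ≥ ⌊√s⌋² + ⌊√s⌋`, and `0` otherwise. -/
def deltaS (s : ℕ) : ℤ := if Nat.sqrt s ^ 2 + Nat.sqrt s ≤ s then 1 else 0

/-- `q_s = 2⌊√s⌋ + 2 + δ_s`. -/
def qS (s : ℕ) : ℤ := 2 * (Nat.sqrt s : ℤ) + 2 + deltaS s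

/-- `c_s = s - ⌊√s⌋² - δ_s⌊√s⌋`. -/
def cS (s : ℕ) : ℤ := (s : ℤ) - (Nat.sqrt s : ℤ) ^ 2 - deltaS s * (Nat.sqrt s : ℤ)

/-- For `s = k(k+1) + i` with `0 ≤ i ≤ 2k+1`: `x_s^even`. -/
def xEvenN (k i : ℕ) : ℕ := if i ≤ k then i else i - k - 1

/-- For `s = k(k+1) + i` with `0 ≤ i ≤ 2k+1`: `y_s^even`. -/
def yEvenN (k i : ℕ) : ℕ := if i ≤ k then 2 * (k - i) else 4 * k + 3 - 2 * i

/-- For `s = k(k+1) + i` with `0 ≤ i ≤ 2k+1`: `x_s^odd`. -/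
def xOddN (k i : ℕ) : ℕ := if i ≤ k then 2 * i else 2 * (i - k) - 1

/-- For `s = k(k+1) + i` with `0 ≤ i ≤ 2k+1`: `y_s^odd`. -/
def yOddN (k i : ℕ) : ℕ := if i ≤ k then k - i else 2 * k + 1 - i

lemma repCount_ge {α : Type*} (a : Fin 3 → ℕ) (ha : ∀ i, 0 < a i) (N : ℕ) (T : Finset α)
    (g : α → Fin 3 → ℕ) (hg : ∀ τ ∈ T, ∑ i, a i * g τ i = N)
    (hinj : ∀ τ ∈ T, ∀ σ ∈ T, g τ = g σ → τ = σ) : T.card ≤ repCount a N := by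
  have hle : ∀ τ ∈ T, ∀ i, g τ i < N + 1 := by
    intro τ hτ i
    have h1 : a i * g τ i ≤ ∑ i, a i * g τ i :=
      Finset.single_le_sum (f := fun i => a i * g τ i) (fun _ _ => Nat.zero_le _)
        (Finset.mem_univ i)
    rw [hg τ hτ] at h1
    have := Nat.le_mul_of_pos_left (g τ i) (ha i)
    omega
  unfold repCount
  apply Finset.card_le_card_of_injOn (fun τ i => Fin.ofNat (N + 1) (g τ i))
  · intro τ hτ
    simp only [Finset.coe_filter, Finset.mem_univ, true_and, Set.mem_ofPred_eq]
    rw [← hg τ hτ]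
    apply Finset.sum_congr rfl
    intro i _
    rw [hg τ hτ]
    simp [Fin.ofNat, Nat.mod_eq_of_lt (hle τ hτ i)]
  · intro τ hτ σ hσ h
    apply hinj τ hτ σ hσ
    funext i
    have h2 := congrArg Fin.val (congrFun h i)
    simpa [Fin.ofNat, Nat.mod_eq_of_lt (hle τ hτ i), Nat.mod_eq_of_lt (hle σ hσ i)] using h2

lemma exists_residue (p c : ℕ) (hp : 0 < p) (hc : Nat.Coprime p c) (N : ℤ) :
    ∃ z : ℕ, z < p ∧ (p : ℤ) ∣ N - c * z := by
  have hb := Nat.gcd_eq_gcd_ab p c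
  rw [hc] at hb
  have hp' : (0 : ℤ) < p := by exact_mod_cast hp
  refine ⟨((N * Nat.gcdB p c) % p).toNat, ?_, ?_⟩
  · have := Int.emod_lt_of_pos (N * Nat.gcdB p c) hp'
    have := Int.emod_nonneg (N * Nat.gcdB p c) hp'.ne'
    omega
  · rw [Int.toNat_of_nonneg (Int.emod_nonneg _ hp'.ne')]
    have h1 := Int.emod_add_mul_ediv (N * Nat.gcdB p c) p
    refine ⟨N * Nat.gcdA p c + c * (N * Nat.gcdB p c / p), ?_⟩
    push_cast at hb
    linear_combination N * hb - c * h1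

lemma genFrob_eq (p q u r : ℕ) (hp : 0 < p) (hq : 0 < q) (hu : 0 < u) (hr : 0 < r)
    (h1 : Nat.Coprime p (q * r)) (h2 : Nat.Coprime q (u * p)) (s : ℕ) (V : ℕ)
    (T : Finset (ℕ × ℕ)) (hT : s + 1 ≤ T.card) (hTV : ∀ x ∈ T, u * x.1 + r * x.2 ≤ V)
    (S : Finset (ℕ × ℕ)) (hS : S.card ≤ s) (hSV : ∀ x, u * x.1 + r * x.2 < V → x ∈ S) :
    genFrob ![u * p, p * q, q * r] s =
      (p : ℤ) * q * (V - 1) + u * p * (q - 1) + q * r * (p - 1) := by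
  set G : ℤ := (p : ℤ) * q * (V - 1) + u * p * (q - 1) + q * r * (p - 1) with hG
  have hp' : (0 : ℤ) < p := by exact_mod_cast hp
  have hq' : (0 : ℤ) < q := by exact_mod_cast hq
  have hu' : (0 : ℤ) < u := by exact_mod_cast hu
  have hr' : (0 : ℤ) < r := by exact_mod_cast hr
  have hGE : IsGreatest {m : ℤ | repCountZ ![u * p, p * q, q * r] m ≤ s} G := by
    constructor
    · show repCountZ _ _ ≤ s
      unfold repCountZ
      split_ifs with h0
      swap
      · exact Nat.zero_le _
      refine le_trans ?_ hS
      unfold repCount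
      have key : ∀ x : Fin 3 → Fin (G.toNat + 1),
          ∑ i, ![u * p, p * q, q * r] i * (x i : ℕ) = G.toNat →
          (x 0 : ℕ) = q * ((x 0 : ℕ) / q) + (q - 1) ∧ (x 2 : ℕ) = p * ((x 2 : ℕ) / p) + (p - 1) ∧
          u * ((x 0 : ℕ) / q) + r * ((x 2 : ℕ) / p) + (x 1 : ℕ) + 1 = V := by
        intro x hx
        obtain ⟨a, ha⟩ : ∃ a : ℕ, a = (x 0 : ℕ) := ⟨_, rfl⟩
        obtain ⟨b, hb⟩ : ∃ a : ℕ, a = (x 1 : ℕ) := ⟨_, rfl⟩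
        obtain ⟨c, hc⟩ : ∃ a : ℕ, a = (x 2 : ℕ) := ⟨_, rfl⟩
        simp only [Fin.sum_univ_three, Matrix.cons_val_zero, Matrix.cons_val_one,
          Matrix.cons_val] at hx
        rw [← ha, ← hb, ← hc] at *
        have hxz : (u : ℤ) * p * a + p * q * b + q * r * c = G := by
          rw [← Int.toNat_of_nonneg h0, ← hx]; push_cast; ring
        have d1 : q ∣ a + 1 := by
          have : (q : ℤ) ∣ ((u * p : ℕ) : ℤ) * ((a + 1 : ℕ) : ℤ) := by
            refine ⟨p * (V - 1) + u * p + r * (p - 1) - p * b - r * c, ?_⟩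
            push_cast
            rw [hG] at hxz
            linear_combination hxz
          have : q ∣ (u * p) * (a + 1) := by exact_mod_cast this
          exact h2.dvd_of_dvd_mul_left this
        have d2 : p ∣ c + 1 := by
          have : (p : ℤ) ∣ ((q * r : ℕ) : ℤ) * ((c + 1 : ℕ) : ℤ) := by
            refine ⟨q * (V - 1) + u * (q - 1) + q * r - u * a - q * b, ?_⟩
            push_cast
            rw [hG] at hxz
            linear_combination hxz
          have : p ∣ (q * r) * (c + 1) := by exact_mod_cast this
          exact h1.dvd_of_dvd_mul_left this
        obtain ⟨a1, ha1⟩ := d1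
        obtain ⟨c1, hc1⟩ := d2
        obtain ⟨a', rfl⟩ : ∃ a', a1 = a' + 1 := by
          cases a1 with
          | zero => simp at ha1
          | succ k => exact ⟨k, rfl⟩
        obtain ⟨c', rfl⟩ : ∃ a', c1 = a' + 1 := by
          cases c1 with
          | zero => simp at hc1
          | succ k => exact ⟨k, rfl⟩
        have ea : a = q * a' + (q - 1) := by
          rw [Nat.mul_succ] at ha1; omega
        have ec : c = p * c' + (p - 1) := by
          rw [Nat.mul_succ] at hc1; omega
        have ea' : a / q = a' := by
          rw [ea, Nat.mul_add_div hq, Nat.div_eq_of_lt (by omega)]; rfl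
        have ec' : c / p = c' := by
          rw [ec, Nat.mul_add_div hp, Nat.div_eq_of_lt (by omega)]; rfl
        rw [ea', ec']
        refine ⟨ea, ec, ?_⟩
        have za : (a : ℤ) + 1 = q * (a' + 1) := by exact_mod_cast ha1
        have zc : (c : ℤ) + 1 = p * (c' + 1) := by exact_mod_cast hc1
        have : (p : ℤ) * q * (u * a' + r * c' + b + 1) = p * q * V := by
          rw [hG] at hxz
          linear_combination hxz - u * p * za - q * r * zc
        have := mul_left_cancel₀ (mul_pos hp' hq').ne' this
        exact_mod_cast this
      apply Finset.card_le_card_of_injOn (fun x => ((x 0 : ℕ) / q, (x 2 : ℕ) / p))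
      · intro x hx
        have hx' := key x (by simpa using hx)
        apply hSV
        simp only
        omega
      · intro x hx y hy hxy
        have hx' := key x (by simpa using hx)
        have hy' := key y (by simpa using hy)
        simp only [Prod.mk.injEq] at hxy
        rw [hxy.1, hxy.2] at hx'
        funext i
        apply Fin.ext
        fin_cases i
        · show (x 0 : ℕ) = y 0
          omega
        · show (x 1 : ℕ) = y 1
          omega
        · show (x 2 : ℕ) = y 2
          omega
    · intro N hN
      by_contra hlt
      push Not at hlt
      have hN : repCountZ ![u * p, p * q, q * r] N ≤ s := hN
      obtain ⟨z0, hz0, c, hc⟩ := exists_residue p (q * r) hp h1 N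
      obtain ⟨x0, hx0, d, hd⟩ := exists_residue q (u * p) hq h2 N
      obtain ⟨M, hM⟩ : ((p : ℤ) * q) ∣ N - u * p * x0 - q * r * z0 := by
        apply IsCoprime.mul_dvd
        · exact Nat.isCoprime_iff_coprime.2 (h1.coprime_dvd_right (Dvd.intro _ rfl))
        · refine ⟨c - u * x0, ?_⟩
          push_cast at hc
          linear_combination hc
        · refine ⟨d - r * z0, ?_⟩
          push_cast at hd
          linear_combination hd
      have hMV : (V : ℤ) ≤ M := by
        have hz : (z0 : ℤ) ≤ p - 1 := by omega
        have hx : (x0 : ℤ) ≤ q - 1 := by omega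
        have e1 : (u : ℤ) * p * x0 ≤ u * p * (q - 1) := by gcongr
        have e2 : (q : ℤ) * r * z0 ≤ q * r * (p - 1) := by gcongr
        have : (p : ℤ) * q * (V - 1) < p * q * M := by rw [← hM]; linarith
        have := lt_of_mul_lt_mul_left this (mul_pos hp' hq').le
        omega
      have hN0 : 0 ≤ N := by
        have : N = u * p * x0 + q * r * z0 + p * q * M := by linear_combination hM
        rw [this]
        have : 0 ≤ M := by omega
        positivity
      rw [repCountZ, if_pos hN0] at hN
      have hge := repCount_ge ![u * p, p * q, q * r]
        (by intro i; fin_cases i <;> simp <;> constructor <;> assumption) N.toNat T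
        (fun x => ![x0 + q * x.1, (M - u * x.1 - r * x.2).toNat, z0 + p * x.2])
        (by
          intro x hx
          have hv := hTV x hx
          have hv' : (u : ℤ) * x.1 + r * x.2 ≤ V := by exact_mod_cast hv
          have h3 : 0 ≤ M - u * x.1 - r * x.2 := by linarith
          simp only [Fin.sum_univ_three, Matrix.cons_val_zero, Matrix.cons_val_one,
            Matrix.cons_val]
          zify
          rw [Int.toNat_of_nonneg h3, Int.toNat_of_nonneg hN0]
          linear_combination -hM)
        (by
          intro x hx y hy hxy
          have e0 := congrFun hxy 0
          have e2 := congrFun hxy 2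
          simp at e0 e2
          apply Prod.ext
          · rcases e0 with h | h
            · exact h
            · omega
          · rcases e2 with h | h
            · exact h
            · omega)
      omega
  exact hGE.csSup_eq

/-- Elements `(w, i)` lexicographically before `(W, I)`. -/
def lexL (W I : ℕ) : Finset (Σ _ : ℕ, ℕ) :=
  (Finset.range (W + 1)).sigma (fun w => Finset.range (if w < W then w / 2 + 1 else I))

lemma lexL_card (W I : ℕ) : (lexL W I).card = (W + 1) ^ 2 / 4 + I := by
  have hs : ∀ W : ℕ, ∑ w ∈ Finset.range W, (w / 2 + 1) = (W + 1) ^ 2 / 4 := by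
    intro W
    induction W with
    | zero => rfl
    | succ k ih =>
      rw [Finset.sum_range_succ, ih]
      rcases Nat.even_or_odd' k with ⟨j, rfl | rfl⟩
      · have e1 : (2 * j + 1) ^ 2 = 4 * (j ^ 2 + j) + 1 := by ring
        have e2 : (2 * j + 1 + 1) ^ 2 = 4 * (j ^ 2 + j + (j + 1)) := by ring
        rw [e1, e2]; omega
      · have e1 : (2 * j + 1 + 1) ^ 2 = 4 * (j ^ 2 + 2 * j + 1) := by ring
        have e2 : (2 * j + 1 + 1 + 1) ^ 2 = 4 * (j ^ 2 + 2 * j + 1 + (j + 1)) + 1 := by ring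
        rw [e1, e2]; omega
  unfold lexL
  rw [Finset.card_sigma, Finset.sum_range_succ, ← hs W]
  congr 1
  · apply Finset.sum_congr rfl
    intro w hw
    rw [if_pos (Finset.mem_range.1 hw), Finset.card_range]
  · simp

lemma genFrob_row (p q u r : ℕ) (hp : 0 < p) (hq : 0 < q) (hu : 0 < u) (hr : 0 < r)
    (h1 : Nat.Coprime p (q * r)) (h2 : Nat.Coprime q (u * p))
    (e : ℕ → ℕ → ℕ × ℕ) (f : ℕ → ℕ)
    (hval : ∀ w i, i ≤ w / 2 → u * (e w i).1 + r * (e w i).2 = f w + 3 * i)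
    (hinj : ∀ w i w' i', i ≤ w / 2 → i' ≤ w' / 2 → e w i = e w' i' → w = w' ∧ i = i')
    (hsurj : ∀ x : ℕ × ℕ, ∃ w i, i ≤ w / 2 ∧ e w i = x)
    (W I : ℕ) (hI : I ≤ W / 2)
    (hlow : ∀ w i, w < W → i ≤ w / 2 → f w + 3 * i ≤ f W + 3 * I)
    (hhigh : ∀ w, W < w → f W + 3 * I ≤ f w) :
    genFrob ![u * p, p * q, q * r] ((W + 1) ^ 2 / 4 + I) =
      (p : ℤ) * q * ((f W + 3 * I : ℕ) - 1) + u * p * (q - 1) + q * r * (p - 1) := by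
  have hmem : ∀ J (x : Σ _ : ℕ, ℕ), J ≤ W / 2 + 1 → x ∈ lexL W J →
      x.2 ≤ x.1 / 2 ∧ (x.1 < W ∨ (x.1 = W ∧ x.2 < J)) := by
    intro J x hJ hx
    simp only [lexL, Finset.mem_sigma, Finset.mem_range] at hx
    obtain ⟨a, b⟩ := hx
    split_ifs at b with h
    · omega
    · have : x.1 = W := by omega
      rw [this]
      omega
  apply genFrob_eq p q u r hp hq hu hr h1 h2 _ _ ((lexL W (I + 1)).image (fun x => e x.1 x.2))
    _ _ ((lexL W I).image (fun x => e x.1 x.2))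
  · exact Finset.card_image_le.trans (lexL_card W I).le
  · intro x hx
    obtain ⟨w, i, hi, rfl⟩ := hsurj x
    rw [hval w i hi] at hx
    refine Finset.mem_image.2 ⟨⟨w, i⟩, ?_, rfl⟩
    simp only [lexL, Finset.mem_sigma, Finset.mem_range]
    rcases lt_trichotomy w W with h | h | h
    · rw [if_pos h]; omega
    · subst h
      rw [if_neg (lt_irrefl _)]; omega
    · have := hhigh w h
      omega
  · rw [Finset.card_image_of_injOn, lexL_card]
    · omega
    · intro x hx y hy hxy
      obtain ⟨h3, h4⟩ := hinj _ _ _ _ (hmem _ x (by omega) hx).1 (hmem _ y (by omega) hy).1 hxy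
      cases x; cases y
      simp only at h3 h4
      subst h3; subst h4; rfl
  · intro x hx
    obtain ⟨⟨w, i⟩, hy, rfl⟩ := Finset.mem_image.1 hx
    obtain ⟨h3, h4⟩ := hmem _ _ (by omega) hy
    simp only at h3 h4 ⊢
    rw [hval w i h3]
    rcases h4 with h | ⟨rfl, h⟩
    · exact hlow w i h h3
    · omega

lemma genFrob_diff (p q u r : ℕ) (hp : 0 < p) (hq : 0 < q) (hu : 0 < u) (hr : 0 < r)
    (h1 : Nat.Coprime p (q * r)) (h2 : Nat.Coprime q (u * p))
    (e : ℕ → ℕ → ℕ × ℕ) (f : ℕ → ℕ)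
    (hval : ∀ w i, i ≤ w / 2 → u * (e w i).1 + r * (e w i).2 = f w + 3 * i)
    (hinj : ∀ w i w' i', i ≤ w / 2 → i' ≤ w' / 2 → e w i = e w' i' → w = w' ∧ i = i')
    (hsurj : ∀ x : ℕ × ℕ, ∃ w i, i ≤ w / 2 ∧ e w i = x)
    (W I s : ℕ) (hs : s = (W + 1) ^ 2 / 4 + I) (hI : I + 1 ≤ W / 2)
    (hlow : ∀ w i, w < W → i ≤ w / 2 → f w + 3 * i ≤ f W)
    (hhigh : ∀ w, W < w → f W + 3 * (I + 1) ≤ f w) :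
    genFrob ![u * p, p * q, q * r] (s + 1) - genFrob ![u * p, p * q, q * r] s = 3 * p * q := by
  subst hs
  rw [genFrob_row p q u r hp hq hu hr h1 h2 e f hval hinj hsurj W I (by omega)
      (fun w i a b => (hlow w i a b).trans (by omega))
      (fun w a => le_trans (by omega) (hhigh w a)),
    add_assoc,
    genFrob_row p q u r hp hq hu hr h1 h2 e f hval hinj hsurj W (I + 1) (by omega)
      (fun w i a b => (hlow w i a b).trans (by omega))
      (fun w a => hhigh w a)]
  push_cast
  ring

lemma row_exists (s : ℕ)
    (hB : ¬ ∃ k : ℕ, 1 ≤ k ∧ (s + 1 = k ^ 2 ∨ s + 1 = k * (k + 1))) :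
    ∃ k I, 1 ≤ k ∧ ((s = k * k + I ∧ I + 2 ≤ k) ∨ (s = k * (k + 1) + I ∧ I + 1 ≤ k)) := by
  have a1 := Nat.sqrt_le (s + 1)
  have a3 := Nat.lt_succ_sqrt (s + 1)
  have a4 : 1 ≤ Nat.sqrt (s + 1) := Nat.sqrt_pos.2 (by omega)
  generalize Nat.sqrt (s + 1) = k at *
  have b1 : s + 1 ≠ k * k := fun h => hB ⟨k, a4, Or.inl (by rw [h]; ring)⟩
  have b2 : s + 1 ≠ k * (k + 1) := fun h => hB ⟨k, a4, Or.inr h⟩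
  have a3' : s + 1 < k * k + 2 * k + 1 := by
    have : k.succ * k.succ = k * k + 2 * k + 1 := by simp only [Nat.succ_eq_add_one]; ring
    omega
  have e : k * (k + 1) = k * k + k := by ring
  rw [e] at b2
  rcases lt_or_ge (s + 1) (k * k + k) with h | h
  · exact ⟨k, s - k * k, a4, Or.inl (by omega)⟩
  · exact ⟨k, s - (k * k + k), a4, Or.inr (by omega)⟩

lemma t_even (m : ℕ) : t (2 * m) = m * (2 * m + 1) := by
  unfold t
  rw [mul_assoc, Nat.mul_div_cancel_left _ (by norm_num)]

lemma t_odd (m : ℕ) : t (2 * m + 1) = (2 * m + 1) * (m + 1) := by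
  unfold t
  rw [show (2 * m + 1) * (2 * m + 1 + 1) = 2 * ((2 * m + 1) * (m + 1)) by ring,
    Nat.mul_div_cancel_left _ (by norm_num)]

lemma even_case (s m W I : ℕ) (hm : 0 < m) (hs : s = (W + 1) ^ 2 / 4 + I) (hI : I + 1 ≤ W / 2)
    (hb1 : 3 * ((W - 1) / 2) ≤ m) (hb2 : 3 * (I + 1) ≤ m) :
    genFrob ![t (2 * m), t (2 * m + 1), t (2 * m + 2)] (s + 1)
      - genFrob ![t (2 * m), t (2 * m + 1), t (2 * m + 2)] s = 3 * (2 * m + 1) * (m + 1) := by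
  have e3 : t (2 * m + 2) = (m + 1) * (2 * m + 3) := by
    rw [show 2 * m + 2 = 2 * (m + 1) by ring, t_even]; ring
  rw [t_even, t_odd, e3]
  have c0 : Nat.Coprime (2 * m + 1) (m + 1) := by
    have : IsCoprime ((2 * m + 1 : ℕ) : ℤ) ((m + 1 : ℕ) : ℤ) :=
      ⟨-1, 2, by push_cast; ring⟩
    exact Nat.isCoprime_iff_coprime.1 this
  have c1 : Nat.Coprime (2 * m + 1) (2 * m + 3) := by
    have : IsCoprime ((2 * m + 1 : ℕ) : ℤ) ((2 * m + 3 : ℕ) : ℤ) :=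
      ⟨m + 1, -m, by push_cast; ring⟩
    exact Nat.isCoprime_iff_coprime.1 this
  have c2 : Nat.Coprime (m + 1) m := by simp
  have := genFrob_diff (2 * m + 1) (m + 1) m (2 * m + 3) (by omega) (by omega) hm (by omega)
    (c0.mul_right c1) (c2.mul_right c0.symm)
    (fun w i => (w - 2 * i, i)) (fun w => m * w)
    (by
      intro w i hi
      obtain ⟨v, rfl⟩ : ∃ v, w = v + 2 * i := ⟨w - 2 * i, by omega⟩
      simp only [Nat.add_sub_cancel]
      ring)
    (by
      intro w i w' i' h h' hh
      simp only [Prod.mk.injEq] at hh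
      omega)
    (by
      rintro ⟨a, b⟩
      refine ⟨a + 2 * b, b, by omega, ?_⟩
      simp)
    W I s hs hI
    (by
      intro w i hw hi
      have : m * (w + 1) ≤ m * W := Nat.mul_le_mul_left _ hw
      have : i ≤ (W - 1) / 2 := by omega
      nlinarith)
    (by
      intro w hw
      have : m * (W + 1) ≤ m * w := Nat.mul_le_mul_left _ hw
      nlinarith)
  rw [this]
  push_cast
  ring

lemma odd_case (s m W I : ℕ) (hs : s = (W + 1) ^ 2 / 4 + I) (hI : I + 1 ≤ W / 2)
    (hb1 : 3 * (W / 2) ≤ m + 2) (hb2 : 3 * ((W + 1) / 2) ≤ m + 2 + 3 * (W / 2 - (I + 1))) :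
    genFrob ![t (2 * m + 1), t (2 * m + 2), t (2 * m + 3)] (s + 1)
      - genFrob ![t (2 * m + 1), t (2 * m + 2), t (2 * m + 3)] s
      = 3 * (m + 1) * (2 * m + 3) := by
  have e1 : t (2 * m + 1) = (2 * m + 1) * (m + 1) := t_odd m
  have e2 : t (2 * m + 2) = (m + 1) * (2 * m + 3) := by
    rw [show 2 * m + 2 = 2 * (m + 1) by ring, t_even]; ring
  have e3 : t (2 * m + 3) = (2 * m + 3) * (m + 2) := by
    rw [show 2 * m + 3 = 2 * (m + 1) + 1 by ring, t_odd]
  rw [e1, e2, e3]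
  have c0 : Nat.Coprime (m + 1) (2 * m + 3) := by
    have : IsCoprime ((m + 1 : ℕ) : ℤ) ((2 * m + 3 : ℕ) : ℤ) :=
      ⟨-2, 1, by push_cast; ring⟩
    exact Nat.isCoprime_iff_coprime.1 this
  have c1 : Nat.Coprime (2 * m + 3) (2 * m + 1) := by
    have : IsCoprime ((2 * m + 3 : ℕ) : ℤ) ((2 * m + 1 : ℕ) : ℤ) :=
      ⟨-m, m + 1, by push_cast; ring⟩
    exact Nat.isCoprime_iff_coprime.1 this
  have c2 : Nat.Coprime (m + 1) (m + 2) := by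
    have : IsCoprime ((m + 1 : ℕ) : ℤ) ((m + 2 : ℕ) : ℤ) :=
      ⟨-1, 1, by push_cast; ring⟩
    exact Nat.isCoprime_iff_coprime.1 this
  -- `f w = (m+2) w - 3 (w/2)` written without subtraction
  have := genFrob_diff (m + 1) (2 * m + 3) (2 * m + 1) (m + 2) (by omega) (by omega) (by omega)
    (by omega) (c0.mul_right c2) (c1.mul_right c0.symm)
    (fun w i => (w / 2 - i, w - 2 * (w / 2 - i)))
    (fun w => (2 * m + 1) * (w / 2) + (m + 2) * (w % 2))
    (by
      intro w i hi
      obtain ⟨v, hv⟩ : ∃ v, w / 2 = v + i := ⟨w / 2 - i, by omega⟩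
      have h3 : w / 2 - i = v := by omega
      have h4 : w - 2 * v = w % 2 + 2 * i := by omega
      simp only [h3, h4]
      rw [hv]
      ring)
    (by
      intro w i w' i' h h' hh
      simp only [Prod.mk.injEq] at hh
      omega)
    (by
      rintro ⟨a, b⟩
      refine ⟨b + 2 * a, b / 2, by omega, ?_⟩
      simp only [Prod.mk.injEq]
      omega)
    W I s hs hI
    (by
      intro w i hw hi
      have h1 : (2 * m + 1) * (w / 2) + (m + 2) * (w % 2) + 3 * (w / 2) = (m + 2) * w := by
        conv_rhs => rw [← Nat.div_add_mod w 2]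
        ring
      have h2 : (2 * m + 1) * (W / 2) + (m + 2) * (W % 2) + 3 * (W / 2) = (m + 2) * W := by
        conv_rhs => rw [← Nat.div_add_mod W 2]
        ring
      have : (m + 2) * (w + 1) ≤ (m + 2) * W := Nat.mul_le_mul_left _ hw
      rw [Nat.mul_succ] at this
      omega)
    (by
      intro w hw
      have h1 : (2 * m + 1) * (w / 2) + (m + 2) * (w % 2) + 3 * (w / 2) = (m + 2) * w := by
        conv_rhs => rw [← Nat.div_add_mod w 2]
        ring
      have h2 : (2 * m + 1) * (W / 2) + (m + 2) * (W % 2) + 3 * (W / 2) = (m + 2) * W := by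
        conv_rhs => rw [← Nat.div_add_mod W 2]
        ring
      obtain ⟨d, rfl⟩ : ∃ d, w = W + 1 + d := ⟨w - (W + 1), by omega⟩
      have h5 : (m + 2) * (W + 1 + d) = (m + 2) * W + (m + 2) + (m + 2) * d := by ring
      have h6 : 3 * d ≤ (m + 2) * d := Nat.mul_le_mul_right _ (by omega)
      have h7 : (W + 1 + d) / 2 ≤ (W + 1) / 2 + d := by omega
      omega)
  rw [this]
  push_cast
  ring

/-- if `s+1 ∉ B` then, for even `n > N_{s+1}^even` or odd `n > N_{s+1}^odd`,
`g(…; s+1) - g(…; s) = 6(n+1)(n+2)/4`. -/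
theorem stmt_2 (s n : ℕ) (hn : 1 ≤ n)
    (hB : ¬ ∃ k : ℕ, 1 ≤ k ∧ (s + 1 = k ^ 2 ∨ s + 1 = k * (k + 1)))
    (hcase : (Even n ∧ (n : ℤ) > NEven (s + 1)) ∨ (Odd n ∧ (n : ℤ) > NOdd (s + 1))) :
    genFrob ![t n, t (n + 1), t (n + 2)] (s + 1) - genFrob ![t n, t (n + 1), t (n + 2)] s =
      6 * ((n : ℤ) + 1) * ((n : ℤ) + 2) / 4 := by
  obtain ⟨k, I, hk, hrow⟩ := row_exists s hB
  rcases hcase with ⟨⟨m, hm⟩, hN⟩ | ⟨⟨m, hm⟩, hN⟩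
  · have hm' : n = 2 * m := by omega
    subst hm'
    have hm0 : 0 < m := by omega
    have hrhs : 6 * (((2 * m : ℕ) : ℤ) + 1) * (((2 * m : ℕ) : ℤ) + 2) / 4
        = 3 * (2 * m + 1) * (m + 1) := by
      apply Int.ediv_eq_of_eq_mul_left (by norm_num)
      push_cast
      ring
    rw [hrhs]
    unfold NEven at hN
    rcases hrow with ⟨h, h'⟩ | ⟨h, h'⟩
    · have hsq : k ≤ Nat.sqrt (s + 1 + 1) := Nat.le_sqrt.2 (by omega)
      apply even_case s m (2 * k - 1) I hm0 _ (by omega) (by omega) (by omega)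
      have : (2 * k - 1 + 1) ^ 2 = 4 * (k * k) := by
        rw [Nat.sub_add_cancel (by omega)]; ring
      rw [this]; omega
    · have e : k * (k + 1) = k * k + k := by ring
      have hsq : k ≤ Nat.sqrt (s + 1 + 1) := Nat.le_sqrt.2 (by omega)
      have hsq2 : I + 1 = k → k + 1 ≤ Nat.sqrt (s + 1 + 1) := by
        intro hIk
        apply Nat.le_sqrt.2
        have : (k + 1) * (k + 1) = k * k + 2 * k + 1 := by ring
        omega
      apply even_case s m (2 * k) I hm0 _ (by omega) (by omega) (by omega)
      have : (2 * k + 1) ^ 2 = 4 * (k * (k + 1)) + 1 := by ring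
      rw [this]; omega
  · subst hm
    have hrhs : 6 * (((2 * m + 1 : ℕ) : ℤ) + 1) * (((2 * m + 1 : ℕ) : ℤ) + 2) / 4
        = 3 * (m + 1) * (2 * m + 3) := by
      apply Int.ediv_eq_of_eq_mul_left (by norm_num)
      push_cast
      ring
    rw [hrhs]
    unfold NOdd at hN
    have hj : ∀ j : ℕ, j * j + j ≤ s + 2 → 2 * j + 1 ≤ Nat.sqrt (4 * (s + 1) + 5) := by
      intro j hj
      apply Nat.le_sqrt.2
      have : (2 * j + 1) * (2 * j + 1) = 4 * (j * j + j) + 1 := by ring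
      omega
    rcases hrow with ⟨h, h'⟩ | ⟨h, h'⟩
    · have g1 := hj (k - 1) (by
        obtain ⟨l, rfl⟩ : ∃ l, k = l + 1 := ⟨k - 1, by omega⟩
        have : (l + 1) * (l + 1) = l * l + 2 * l + 1 := by ring
        simp only [Nat.add_sub_cancel]
        omega)
      have g2 : I + 2 = k → 2 * k + 1 ≤ Nat.sqrt (4 * (s + 1) + 5) := by
        intro hIk
        exact hj k (by omega)
      apply odd_case s m (2 * k - 1) I _ (by omega) (by omega) (by omega)
      have : (2 * k - 1 + 1) ^ 2 = 4 * (k * k) := by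
        rw [Nat.sub_add_cancel (by omega)]; ring
      rw [this]; omega
    · have e : k * (k + 1) = k * k + k := by ring
      have g1 := hj k (by omega)
      apply odd_case s m (2 * k) I _ (by omega) (by omega) (by omega)
      have : (2 * k + 1) ^ 2 = 4 * (k * (k + 1)) + 1 := by ring
      rw [this]; omega
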